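/- arXiv:2407.05114 — 7 statements merged into one kernel-verified Lean document; each statement's English description precedes it below -/
import Mathlib

section
/- Let μ > 0, let c > 0, and let π = p_1 p_2 … p_k be a c-packed polygonal curve in ℝ^d. Then the greedy μ-simplification simpl(π,μ) is a 6c-packed polygonal curve. -/
open scoped BigOperators

noncomputable section

/-- Points of `d`-dimensional Euclidean space. -/
abbrev Pt (d : ℕ) := EuclideanSpace ℝ (Fin d)

/-- A reparametrization: a continuous nondecreasing surjection of `[0,1]` onto itself
(equivalently, continuous and monotone on `[0,1]` with `α 0 = 0` and `α 1 = 1`). -/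
structure IsReparam (α : ℝ → ℝ) : Prop where
  continuousOn : ContinuousOn α (Set.Icc 0 1)
  monotoneOn : MonotoneOn α (Set.Icc 0 1)
  map_zero : α 0 = 0
  map_one : α 1 = 1

/-- The Fréchet distance between two curves parametrized over `[0,1]`. -/
noncomputable def frechetDist {d : ℕ} (P Q : ℝ → Pt d) : ℝ :=
  sInf {r : ℝ | ∃ α β : ℝ → ℝ, IsReparam α ∧ IsReparam β ∧
    r = ⨆ t : Set.Icc (0:ℝ) 1, dist (P (α (t : ℝ))) (Q (β (t : ℝ)))}

/-- The straight-line curve from `a` to `b`, parametrized over `[0,1]`. -/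
def seg {d : ℕ} (a b : Pt d) : ℝ → Pt d := fun t => (1 - t) • a + t • b

/-- The subcurve `K|[s,t]`, reparametrized over `[0,1]`. -/
def subcurve {d : ℕ} (K : ℝ → Pt d) (s t : ℝ) : ℝ → Pt d := fun u => K (s + u * (t - s))

/-- `K` is affine-linear on `[a,b]` (constant if `a = b`, by `div_zero`). -/
def AffineOn {d : ℕ} (K : ℝ → Pt d) (a b : ℝ) : Prop :=
  ∀ x ∈ Set.Icc a b, K x = K a + ((x - a) / (b - a)) • (K b - K a)

/-- Concatenation of two curves parametrized over `[0,1]`. -/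
noncomputable def concat {d : ℕ} (A B : ℝ → Pt d) : ℝ → Pt d :=
  fun t => if t ≤ 1 / 2 then A (2 * t) else B (2 * t - 1)

/-- The point at parameter `t ∈ [0,1]` on the segment with endpoints `e.1`, `e.2`. -/
def interpEdge {d : ℕ} (e : Pt d × Pt d) (t : ℝ) : Pt d := (1 - t) • e.1 + t • e.2

/-- The edges of a polygonal curve given by its list of vertices. -/
def edgesOf {d : ℕ} (l : List (Pt d)) : List (Pt d × Pt d) := l.zip l.tail

/-- The length of the part of segment `e` inside the closed ball `B(q,r)`. -/
noncomputable def segBallLength {d : ℕ} (e : Pt d × Pt d) (q : Pt d) (r : ℝ) : ℝ :=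
  (MeasureTheory.volume
      {t : ℝ | t ∈ Set.Icc (0:ℝ) 1 ∧ interpEdge e t ∈ Metric.closedBall q r}).toReal
    * dist e.1 e.2

/-- A polygonal curve with vertex list `l` is `c`-packed: for every point `q` and radius
`r > 0`, the total length of the curve inside `B(q,r)` is at most `c * r`. -/
def CPacked {d : ℕ} (c : ℝ) (l : List (Pt d)) : Prop :=
  ∀ (q : Pt d) (r : ℝ), 0 < r →
    ((edgesOf l).map (fun e => segBallLength e q r)).sum ≤ c * r

/-- Greedy scan step of the simplification: starting from the current vertex `cur`, mark
the first vertex at distance at least `μ` from `cur` and continue from it. -/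
noncomputable def greedyScan {d : ℕ} (μ : ℝ) : Pt d → List (Pt d) → List (Pt d)
  | _, [] => []
  | cur, p :: rest =>
      if μ ≤ dist cur p then p :: greedyScan μ p rest else greedyScan μ cur rest

open Classical in
/-- The greedy `μ`-simplification of a polygonal curve given by its vertex list: mark the
first vertex, greedily scan forward, and always mark the last vertex. -/
noncomputable def simplList {d : ℕ} (μ : ℝ) : List (Pt d) → List (Pt d)
  | [] => []
  | p :: rest =>
      let s := p :: greedyScan μ p rest
      match rest.getLast? with
      | none => s
      | some last => if s.getLast? = some last then s else s ++ [last]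

/-- `P : [0,1] → ℝ^d` is the polygonal curve through the vertex list `l`, with the uniform
parametrization placing vertex `i` at parameter `i / (|l| - 1)`. -/
def IsPolygonalParamL {d : ℕ} (l : List (Pt d)) (P : ℝ → Pt d) : Prop :=
  (∀ i, i < l.length → P ((i : ℝ) / ((l.length : ℝ) - 1)) = l.getD i 0) ∧
  ∀ i, i + 1 < l.length →
    AffineOn P ((i : ℝ) / ((l.length : ℝ) - 1)) (((i : ℝ) + 1) / ((l.length : ℝ) - 1))

/-- `Q : [0,1] → ℝ^d` is the polygonal curve with vertices `q 0, …, q (m-1)`, with the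
uniform parametrization placing vertex `i` at parameter `i / (m - 1)`. -/
def IsPolygonalParam {d : ℕ} (m : ℕ) (q : ℕ → Pt d) (Q : ℝ → Pt d) : Prop :=
  (∀ i, i < m → Q ((i : ℝ) / ((m : ℝ) - 1)) = q i) ∧
  ∀ i, i + 1 < m →
    AffineOn Q ((i : ℝ) / ((m : ℝ) - 1)) (((i : ℝ) + 1) / ((m : ℝ) - 1))

/-- The Euclidean distance from a point `x` to the segment `e`. -/
noncomputable def segDist {d : ℕ} (e : Pt d × Pt d) (x : Pt d) : ℝ :=
  sInf {r : ℝ | ∃ t ∈ Set.Icc (0:ℝ) 1, r = dist x (interpEdge e t)}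

/-- The trough object of an edge `e`, a subset of `ℝ^d × ℝ`. -/
def trough {d : ℕ} (e : Pt d × Pt d) (δ : ℝ) : Set (Pt d × ℝ) :=
  {p | segDist e p.1 ≤ 4 * p.2 ∧ 4 * p.2 ≤ 8 * δ⁻¹ * dist e.1 e.2}

/-- The axis-parallel hypercube in `ℝ^d × ℝ` with lower corner `(a, b)` and side length `s`. -/
def cube {d : ℕ} (a : Pt d) (b s : ℝ) : Set (Pt d × ℝ) :=
  {p | (∀ i, p.1 i ∈ Set.Icc (a i) (a i + s)) ∧ p.2 ∈ Set.Icc b (b + s)}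

end

open MeasureTheory

/-- total length in a ball -/
noncomputable def packS {d : ℕ} (l : List (Pt d)) (q : Pt d) (r : ℝ) : ℝ :=
  ((edgesOf l).map (fun e => segBallLength e q r)).sum

def ballSet {d : ℕ} (e : Pt d × Pt d) (q : Pt d) (r : ℝ) : Set ℝ :=
  {t : ℝ | t ∈ Set.Icc (0:ℝ) 1 ∧ interpEdge e t ∈ Metric.closedBall q r}

theorem sbl_eq {d : ℕ} (e : Pt d × Pt d) (q : Pt d) (r : ℝ) :
    segBallLength e q r = (volume (ballSet e q r)).toReal * dist e.1 e.2 := rfl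

theorem ballSet_vol_le {d : ℕ} (e : Pt d × Pt d) (q : Pt d) (r : ℝ) :
    volume (ballSet e q r) ≤ 1 := by
  calc volume (ballSet e q r) ≤ volume (Set.Icc (0:ℝ) 1) := measure_mono (fun t ht => ht.1)
    _ = 1 := by simp

theorem ballSet_vol_ne {d : ℕ} (e : Pt d × Pt d) (q : Pt d) (r : ℝ) :
    volume (ballSet e q r) ≠ ⊤ :=
  ne_top_of_le_ne_top ENNReal.one_ne_top (ballSet_vol_le e q r)

theorem sbl_nonneg {d : ℕ} (e : Pt d × Pt d) (q : Pt d) (r : ℝ) :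
    0 ≤ segBallLength e q r := by
  rw [sbl_eq]; positivity

theorem sbl_le_dist {d : ℕ} (e : Pt d × Pt d) (q : Pt d) (r : ℝ) :
    segBallLength e q r ≤ dist e.1 e.2 := by
  rw [sbl_eq]
  have : (volume (ballSet e q r)).toReal ≤ 1 := by
    have := ENNReal.toReal_mono ENNReal.one_ne_top (ballSet_vol_le e q r)
    simpa using this
  nlinarith [dist_nonneg (x := e.1) (y := e.2)]

theorem dist_interp {d : ℕ} (e : Pt d × Pt d) (s t : ℝ) :
    dist (interpEdge e s) (interpEdge e t) = |s - t| * dist e.1 e.2 := by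
  have : interpEdge e s - interpEdge e t = (t - s) • (e.1 - e.2) := by
    simp only [interpEdge]; module
  rw [dist_eq_norm, this, norm_smul, dist_eq_norm, Real.norm_eq_abs, abs_sub_comm]

theorem sbl_le_two {d : ℕ} (e : Pt d × Pt d) (q : Pt d) (r : ℝ) (hr : 0 < r) :
    segBallLength e q r ≤ 2 * r := by
  by_cases h0 : dist e.1 e.2 = 0
  · rw [sbl_eq, h0]; linarith
  have hL : 0 < dist e.1 e.2 := lt_of_le_of_ne dist_nonneg (Ne.symm h0)
  have h1 : volume (ballSet e q r) ≤ ENNReal.ofReal (2 * r / dist e.1 e.2) := by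
    refine (Real.volume_le_diam _).trans ?_
    refine Metric.ediam_le ?_
    intro s hs t ht
    rw [edist_dist]
    apply ENNReal.ofReal_le_ofReal
    rw [le_div_iff₀ hL, Real.dist_eq, ← dist_interp]
    have := dist_triangle_right (interpEdge e s) (interpEdge e t) q
    have h1 := hs.2
    have h2 := ht.2
    rw [Metric.mem_closedBall] at h1 h2
    linarith
  have h2 := ENNReal.toReal_mono ENNReal.ofReal_ne_top h1
  rw [ENNReal.toReal_ofReal (by positivity), le_div_iff₀ hL] at h2
  exact h2

theorem sbl_hit {d : ℕ} (e : Pt d × Pt d) (q : Pt d) (r m : ℝ) (hm : 0 < m)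
    (hit : (ballSet e q r).Nonempty) :
    min (dist e.1 e.2) m ≤ segBallLength e q (r + m) := by
  by_cases h0 : dist e.1 e.2 = 0
  · rw [h0]; exact (min_le_left _ _).trans (sbl_nonneg _ _ _)
  have hL : 0 < dist e.1 e.2 := lt_of_le_of_ne dist_nonneg (Ne.symm h0)
  obtain ⟨s, ⟨hs0, hs1⟩, hs⟩ := hit
  rw [Metric.mem_closedBall] at hs
  obtain ⟨δ, hδ⟩ : ∃ δ, δ = min (dist e.1 e.2) m / dist e.1 e.2 := ⟨_, rfl⟩
  have hδ0 : 0 < δ := by rw [hδ]; positivity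
  have hδ1 : δ ≤ 1 := by rw [hδ, div_le_one hL]; exact min_le_left _ _
  have hδm : δ * dist e.1 e.2 = min (dist e.1 e.2) m := by rw [hδ]; field_simp
  have hsub : Set.Icc (min s (1 - δ)) (min s (1 - δ) + δ) ⊆ ballSet e q (r + m) := by
    intro t ht
    have a1 : min s (1 - δ) ≤ s := min_le_left _ _
    have a2 : min s (1 - δ) ≤ 1 - δ := min_le_right _ _
    have a3 : 0 ≤ min s (1 - δ) := le_min hs0 (by linarith)
    have a4 : s ≤ min s (1 - δ) + δ := by
      rcases min_choice s (1 - δ) with h | h <;> rw [h] <;> linarith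
    refine ⟨⟨by linarith [ht.1], by linarith [ht.2]⟩, ?_⟩
    rw [Metric.mem_closedBall]
    have h1 := dist_triangle (interpEdge e t) (interpEdge e s) q
    rw [dist_interp] at h1
    have h2 : |t - s| ≤ δ := by rw [abs_le]; constructor <;> linarith [ht.1, ht.2]
    have h3 : |t - s| * dist e.1 e.2 ≤ δ * dist e.1 e.2 := by gcongr
    have h4 : min (dist e.1 e.2) m ≤ m := min_le_right _ _
    linarith
  have hv := ENNReal.toReal_mono (ballSet_vol_ne e q (r + m)) (measure_mono (μ := volume) hsub)
  rw [Real.volume_Icc, ENNReal.toReal_ofReal (by linarith)] at hv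
  rw [sbl_eq, ← hδm]
  gcongr
  linarith

theorem sbl_miss {d : ℕ} (e : Pt d × Pt d) (q : Pt d) (r : ℝ)
    (hit : ¬ (ballSet e q r).Nonempty) : segBallLength e q r = 0 := by
  rw [Set.not_nonempty_iff_eq_empty] at hit
  rw [sbl_eq, hit]; simp

theorem sbl_long {d : ℕ} (e : Pt d × Pt d) (q : Pt d) (r m : ℝ) (hm : 0 < m) (hr : 0 < r)
    (h : m ≤ dist e.1 e.2 ∨ m ≤ 2 * r) :
    segBallLength e q r * m ≤ 2 * r * segBallLength e q (r + m) := by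
  have n := sbl_nonneg e q (r + m)
  by_cases hit : (ballSet e q r).Nonempty
  · have h1 := sbl_hit e q r m hm hit
    have h2 := sbl_le_two e q r hr
    have h3 := sbl_le_dist e q r
    have h4 := sbl_nonneg e q r
    rcases le_total m (dist e.1 e.2) with hh | hh
    · rw [min_eq_right hh] at h1
      nlinarith
    · rw [min_eq_left hh] at h1
      have : m ≤ 2 * r ∨ m = dist e.1 e.2 := by
        rcases h with h | h
        · right; linarith
        · left; exact h
      rcases this with h | h
      · nlinarith
      · nlinarith
  · rw [sbl_miss e q r hit]; simp only [zero_mul]; positivity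

/-! list lemmas -/

theorem packS_cons {d : ℕ} (x y : Pt d) (l : List (Pt d)) (q : Pt d) (r : ℝ) :
    packS (x :: y :: l) q r = segBallLength (x, y) q r + packS (y :: l) q r := by
  simp [packS, edgesOf]

theorem packS_single {d : ℕ} (x : Pt d) (q : Pt d) (r : ℝ) : packS [x] q r = 0 := by
  simp [packS, edgesOf]

theorem packS_nonneg {d : ℕ} (l : List (Pt d)) (q : Pt d) (r : ℝ) : 0 ≤ packS l q r := by
  apply List.sum_nonneg
  intro x hx
  obtain ⟨e, -, rfl⟩ := List.mem_map.1 hx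
  exact sbl_nonneg _ _ _

theorem packS_append {d : ℕ} (l₁ : List (Pt d)) (p : Pt d) (l₂ : List (Pt d)) (q : Pt d) (r : ℝ) :
    packS (l₁ ++ p :: l₂) q r = packS (l₁ ++ [p]) q r + packS (p :: l₂) q r := by
  induction l₁ with
  | nil => simp [packS_single]
  | cons x l ih =>
    cases l with
    | nil => simp [packS_cons, packS_single]
    | cons y l =>
      simp only [List.cons_append, packS_cons] at ih ⊢
      linarith

/-! projection -/

open scoped Pointwise in
theorem vol_affine {T : Set ℝ} (a L : ℝ) :
    volume ((fun t => a + t * L) '' T) = ENNReal.ofReal |L| * volume T := by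
  have : (fun t : ℝ => a + t * L) '' T = (fun x => a + x) '' (L • T) := by
    rw [← Set.image_smul, Set.image_image]
    simp [mul_comm]
  rw [this, Set.image_add_left, measure_preimage_add, Measure.addHaar_smul]
  simp

theorem inner_interp {d : ℕ} (v : Pt d) (e : Pt d × Pt d) (t : ℝ) :
    inner ℝ v (interpEdge e t) = inner ℝ v e.1 + t * (inner ℝ v e.2 - inner ℝ v e.1) := by
  simp only [interpEdge, inner_add_right, inner_smul_right]; ring

theorem edge_cover {d : ℕ} (v : Pt d) (hv : ‖v‖ ≤ 1) (x y q : Pt d) (R : ℝ) (A : Set ℝ)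
    (hA : A ⊆ Set.Icc (inner ℝ v x) (inner ℝ v y))
    (h : ∀ t ∈ Set.Icc (0:ℝ) 1, inner ℝ v (interpEdge (x, y) t) ∈ A →
      interpEdge (x, y) t ∈ Metric.closedBall q R) :
    volume A ≤ ENNReal.ofReal (segBallLength (x, y) q R) := by
  have hsub : A ⊆ (fun t : ℝ => inner ℝ v x + t * (inner ℝ v y - inner ℝ v x)) ''
      ballSet (x, y) q R := by
    intro s hs
    have hs' := hA hs
    have : ∃ t ∈ Set.Icc (0:ℝ) 1, inner ℝ v x + t * (inner ℝ v y - inner ℝ v x) = s := by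
      rcases eq_or_lt_of_le (hs'.1.trans hs'.2) with h0 | h0
      · refine ⟨0, by simp, ?_⟩
        have := hs'.1
        have := hs'.2
        linarith
      · have hp : 0 < inner ℝ v y - inner ℝ v x := by linarith
        refine ⟨(s - inner ℝ v x) / (inner ℝ v y - inner ℝ v x), ⟨?_, ?_⟩, ?_⟩
        · exact div_nonneg (by linarith [hs'.1]) hp.le
        · rw [div_le_one hp]; linarith [hs'.2]
        · field_simp; ring
    obtain ⟨t, ht, hts⟩ := this
    refine ⟨t, ⟨ht, h t ht ?_⟩, hts⟩
    rw [inner_interp]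
    simp only [hts, hs]
  refine (measure_mono hsub).trans ?_
  rw [vol_affine, sbl_eq, mul_comm, ENNReal.ofReal_mul ENNReal.toReal_nonneg,
    ENNReal.ofReal_toReal (ballSet_vol_ne _ _ _)]
  gcongr
  rw [← inner_sub_right, dist_comm, dist_eq_norm]
  have := abs_real_inner_le_norm v (y - x)
  have h2 : ‖v‖ * ‖y - x‖ ≤ 1 * ‖y - x‖ := by gcongr
  simp only
  linarith

theorem chain_cover {d : ℕ} (v : Pt d) (hv : ‖v‖ ≤ 1) (q : Pt d) (R : ℝ) (C : Set (Pt d))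
    (hC : Convex ℝ C) (b : Pt d) (m : List (Pt d)) : ∀ (x : Pt d) (A : Set ℝ)
    (_ : A ⊆ Set.Icc (inner ℝ v x) (inner ℝ v b))
    (_ : ∀ z ∈ C, inner ℝ v z ∈ A → z ∈ Metric.closedBall q R)
    (_ : x ∈ C) (_ : b ∈ C) (_ : ∀ p ∈ m, p ∈ C),
    volume A ≤ ENNReal.ofReal (packS (x :: (m ++ [b])) q R) := by
  have hin : ∀ x ∈ C, ∀ y ∈ C, ∀ t ∈ Set.Icc (0:ℝ) 1, interpEdge (x, y) t ∈ C := by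
    intro x hx y hy t ht
    exact hC hx hy (by linarith [ht.2]) ht.1 (by ring)
  induction m with
  | nil =>
    intro x A hA h hx hb _
    simp only [List.nil_append, packS_cons, packS_single, add_zero]
    exact edge_cover v hv x b q R A hA (fun t ht => h _ (hin x hx b hb t ht))
  | cons y m ih =>
    intro x A hA h hx hb hm
    have hy : y ∈ C := hm y (by simp)
    simp only [List.cons_append, packS_cons]
    rw [ENNReal.ofReal_add (sbl_nonneg _ _ _) (packS_nonneg _ _ _)]
    have hsplit : A ⊆ (A ∩ Set.Iic (inner ℝ v y)) ∪ (A ∩ Set.Ici (inner ℝ v y)) := by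
      intro s hs
      rcases le_total s (inner ℝ v y) with h | h
      · left; exact ⟨hs, h⟩
      · right; exact ⟨hs, h⟩
    refine (measure_mono hsplit).trans ((measure_union_le _ _).trans ?_)
    gcongr
    · exact edge_cover v hv x y q R _ (fun s hs => ⟨(hA hs.1).1, hs.2⟩)
        (fun t ht hh => h _ (hin x hx y hy t ht) hh.1)
    · exact ih y _ (fun s hs => ⟨hs.2, (hA hs.1).2⟩) (fun z hz hh => h z hz hh.1) hy hb
        (fun p hp => hm p (by simp [hp]))

theorem norm_perp_le {d : ℕ} (v w : Pt d) (hv : ‖v‖ = 1) : ‖w - inner ℝ v w • v‖ ≤ ‖w‖ := by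
  have h : ‖w - inner ℝ v w • v‖ ^ 2 = ‖w‖ ^ 2 - (inner ℝ v w) ^ 2 := by
    rw [norm_sub_sq_real, inner_smul_right, norm_smul, hv, real_inner_comm w v, Real.norm_eq_abs, mul_one, sq_abs]
    ring
  apply le_of_sq_le_sq _ (norm_nonneg _)
  nlinarith [sq_nonneg (inner ℝ v w : ℝ)]

theorem key {d : ℕ} (μ : ℝ) (hμ : 0 < μ) (a b : Pt d) (m : List (Pt d))
    (hm : ∀ p ∈ m, dist a p ≤ μ) (q : Pt d) (r : ℝ) :
    segBallLength (a, b) q r ≤ packS (a :: (m ++ [b])) q (r + μ) := by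
  by_cases hab : a = b
  · rw [sbl_eq, hab]; simpa using packS_nonneg _ _ _
  have hL : 0 < ‖b - a‖ := norm_pos_iff.2 (sub_ne_zero.2 (Ne.symm hab))
  obtain ⟨v, hvdef⟩ : ∃ v : Pt d, v = ‖b - a‖⁻¹ • (b - a) := ⟨_, rfl⟩
  have hv : ‖v‖ = 1 := by
    rw [hvdef, norm_smul, norm_inv, norm_norm]; field_simp
  have hbv : b - a = ‖b - a‖ • v := by
    rw [hvdef, smul_smul, mul_inv_cancel₀ hL.ne', one_smul]
  have hvv : inner ℝ v v = (1:ℝ) := by rw [real_inner_self_eq_norm_sq, hv]; norm_num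
  have hgb : inner ℝ v b = inner ℝ v a + ‖b - a‖ := by
    have : inner ℝ v (b - a) = ‖b - a‖ := by
      rw [hbv, inner_smul_right, hvv, ← hbv, mul_one]
    rw [inner_sub_right] at this; linarith
  obtain ⟨A, hAdef⟩ : ∃ A : Set ℝ, A = (fun t => inner ℝ v a + t * ‖b - a‖) '' ballSet (a, b) q r :=
    ⟨_, rfl⟩
  obtain ⟨C, hCdef⟩ : ∃ C : Set (Pt d), C = {z | ‖(z - a) - inner ℝ v (z - a) • v‖ ≤ μ} := ⟨_, rfl⟩
  have hC : Convex ℝ C := by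
    rw [hCdef]
    intro x hx y hy s t hs ht hst
    simp only [Set.mem_ofPred_eq] at hx hy ⊢
    have h1 : s • x + t • y - a = s • (x - a) + t • (y - a) := by
      have : a = (s + t) • a := by rw [hst, one_smul]
      conv_lhs => rw [this]
      module
    have h2 : s • x + t • y - a - inner ℝ v (s • x + t • y - a) • v
        = s • ((x - a) - inner ℝ v (x - a) • v) + t • ((y - a) - inner ℝ v (y - a) • v) := by
      rw [h1, inner_add_right, inner_smul_right, inner_smul_right]
      module
    rw [h2]
    refine (norm_add_le _ _).trans ?_
    rw [norm_smul, norm_smul, Real.norm_eq_abs, Real.norm_eq_abs, abs_of_nonneg hs, abs_of_nonneg ht]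
    calc _ ≤ s * μ + t * μ := by gcongr
      _ = μ := by rw [← add_mul, hst, one_mul]
  have hcov := chain_cover v hv.le q (r + μ) C hC b m a A ?_ ?_ ?_ ?_ ?_
  · rw [hAdef, vol_affine, abs_of_pos hL] at hcov
    have := ENNReal.toReal_mono ENNReal.ofReal_ne_top hcov
    rw [ENNReal.toReal_ofReal (packS_nonneg _ _ _), ENNReal.toReal_mul,
      ENNReal.toReal_ofReal hL.le] at this
    rw [sbl_eq, dist_comm, dist_eq_norm, mul_comm]
    exact this
  · rw [hAdef]
    rintro _ ⟨t, ht, rfl⟩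
    have h0 := ht.1.1
    have h1 := ht.1.2
    constructor
    · simp only; nlinarith
    · simp only [hgb]; nlinarith
  · rw [hCdef, hAdef]
    rintro z hz ⟨t, ht, htz⟩
    have h2 := ht.2
    simp only [Set.mem_ofPred_eq] at hz htz
    rw [Metric.mem_closedBall] at h2 ⊢
    have h3 : interpEdge (a, b) t = a + inner ℝ v (z - a) • v := by
      have : inner ℝ v (z - a) = t * ‖b - a‖ := by rw [inner_sub_right]; linarith
      rw [this, mul_smul, ← hbv, interpEdge]
      module
    have h4 : dist z (interpEdge (a, b) t) ≤ μ := by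
      rw [dist_eq_norm, h3, ← sub_sub]; exact hz
    have := dist_triangle z (interpEdge (a, b) t) q
    linarith
  · rw [hCdef]; simp [hμ.le]
  · rw [hCdef]
    simp only [Set.mem_ofPred_eq]
    rw [inner_sub_right, hgb, add_sub_cancel_left, ← hbv]
    simp [hμ.le]
  · intro p hp
    rw [hCdef]
    have := hm p hp
    rw [dist_comm, dist_eq_norm] at this
    exact (norm_perp_le v _ hv).trans this

theorem scan_le {d : ℕ} (μ : ℝ) (hμ : 0 < μ) (q : Pt d) (r : ℝ) (w : Pt d) (rest : List (Pt d)) :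
    ∀ (cur : Pt d) (m : List (Pt d)) (_ : ∀ p ∈ m, dist cur p ≤ μ)
      (_ : (cur :: (m ++ rest)).getLast? = some w),
      packS (cur :: (greedyScan μ cur rest ++ [w])) q r ≤ packS (cur :: (m ++ rest)) q (r + μ) := by
  induction rest with
  | nil =>
    intro cur m hm hw
    simp only [greedyScan, List.nil_append, List.append_nil, packS_cons, packS_single, add_zero] at hw ⊢
    rcases List.eq_nil_or_concat m with rfl | ⟨m', z, rfl⟩
    · simp only [List.getLast?_singleton, Option.some.injEq] at hw
      subst hw
      rw [sbl_eq]; simpa using packS_nonneg _ _ _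
    · have : z = w := by simpa [List.getLast?_cons] using hw
      subst this
      simp only [List.concat_eq_append] at hm ⊢
      exact key μ hμ cur z m' (fun p hp => hm p (by simp [hp])) q r
  | cons p rest ih =>
    intro cur m hm hw
    simp only [greedyScan]
    split_ifs with h
    · have h1 := ih p [] (by simp) (by simpa [List.getLast?_cons, List.getLast?_append] using hw)
      have h2 := key μ hμ cur p m hm q r
      have h3 := packS_append (cur :: m) p rest q (r + μ)
      simp only [List.cons_append, List.nil_append, packS_cons] at h1 h3 ⊢
      linarith
    · have h1 := ih cur (m ++ [p]) (by
        intro x hx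
        rcases List.mem_append.1 hx with hx | hx
        · exact hm x hx
        · simp only [List.mem_singleton] at hx
          subst hx; linarith) (by simpa using hw)
      simpa using h1

theorem scan_long {d : ℕ} (μ : ℝ) (hμ : 0 < μ) (q : Pt d) (r : ℝ) (hr : 0 < r)
    (rest : List (Pt d)) : ∀ cur : Pt d,
    packS (cur :: greedyScan μ cur rest) q r * μ
      ≤ 2 * r * packS (cur :: greedyScan μ cur rest) q (r + μ) := by
  induction rest with
  | nil => intro cur; simp [greedyScan, packS_single]
  | cons p rest ih =>
    intro cur
    simp only [greedyScan]
    split_ifs with h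
    · have h1 := ih p
      have h2 := sbl_long (cur, p) q r μ hμ hr (Or.inl h)
      simp only [packS_cons]
      linarith
    · exact ih cur

theorem packS_snoc {d : ℕ} (x w : Pt d) (l : List (Pt d)) : ∃ z, ∀ q r,
    packS (x :: (l ++ [w])) q r = packS (x :: l) q r + segBallLength (z, w) q r := by
  rcases List.eq_nil_or_concat l with rfl | ⟨l', z, rfl⟩
  · exact ⟨x, fun q r => by simp [packS_cons, packS_single]⟩
  · refine ⟨z, fun q r => ?_⟩
    have := packS_append (x :: l') z [w] q r
    simpa [packS_cons, packS_single] using this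

theorem pack_two {d : ℕ} (c : ℝ) (l : List (Pt d)) (h : CPacked c l) :
    2 ≤ c ∨ ∀ q r, packS l q r = 0 := by
  by_cases hd : ∃ e ∈ edgesOf l, 0 < dist e.1 e.2
  · left
    obtain ⟨e, he, hpos⟩ := hd
    have h1 := h (interpEdge e (1/2)) (dist e.1 e.2 / 2) (by positivity)
    have h2 : segBallLength e (interpEdge e (1/2)) (dist e.1 e.2 / 2) ≤
        ((edgesOf l).map (fun e' => segBallLength e' (interpEdge e (1/2)) (dist e.1 e.2 / 2))).sum := by
      apply List.single_le_sum
      · intro x hx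
        obtain ⟨e, -, rfl⟩ := List.mem_map.1 hx
        exact sbl_nonneg _ _ _
      · exact List.mem_map.2 ⟨e, he, rfl⟩
    have h3 : ballSet e (interpEdge e (1/2)) (dist e.1 e.2 / 2) = Set.Icc 0 1 := by
      ext t
      refine ⟨fun h => h.1, fun h => ⟨h, ?_⟩⟩
      rw [Metric.mem_closedBall, dist_interp]
      have : |t - 1/2| ≤ 1/2 := by rw [abs_le]; constructor <;> linarith [h.1, h.2]
      nlinarith
    rw [sbl_eq, h3] at h2
    simp only [Real.volume_Icc, sub_zero, ENNReal.ofReal_one, ENNReal.toReal_one, one_mul] at h2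
    nlinarith
  · right
    intro q r
    push Not at hd
    apply List.sum_eq_zero
    intro x hx
    obtain ⟨e, he, rfl⟩ := List.mem_map.1 hx
    exact le_antisymm ((sbl_le_dist e q r).trans (hd e he)) (sbl_nonneg _ _ _)

theorem simpl_form {d : ℕ} (μ : ℝ) (p : Pt d) (rest : List (Pt d)) :
    ∃ w, (p :: rest).getLast? = some w ∧
      (simplList μ (p :: rest) = p :: greedyScan μ p rest ∨
       simplList μ (p :: rest) = p :: (greedyScan μ p rest ++ [w])) := by
  cases hr : rest.getLast? with
  | none =>
    refine ⟨p, ?_, Or.inl ?_⟩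
    · simp [List.getLast?_cons, hr]
    · simp [simplList, hr]
  | some w =>
    refine ⟨w, ?_, ?_⟩
    · simp [List.getLast?_cons, hr]
    · simp only [simplList, hr]
      split_ifs
      · left; rfl
      · right; rfl

theorem main_bound {d : ℕ} (μ c : ℝ) (hμ : 0 < μ) (hc : 0 < c) (p w : Pt d) (rest : List (Pt d))
    (hpack : CPacked c (p :: rest)) (hw : (p :: rest).getLast? = some w) (q : Pt d) (r : ℝ)
    (hr : 0 < r) : packS (p :: (greedyScan μ p rest ++ [w])) q r ≤ 6 * c * r := by
  have H : ∀ r, packS (p :: (greedyScan μ p rest ++ [w])) q r ≤ packS (p :: rest) q (r + μ) := by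
    intro r
    simpa using scan_le μ hμ q r w rest p [] (by simp) (by simpa using hw)
  have hcr : 0 < c * r := by positivity
  rcases pack_two c _ hpack with hc2 | hz
  swap
  · have := H r
    rw [hz] at this
    linarith
  have P1 : packS (p :: rest) q (r + μ) ≤ c * (r + μ) := hpack q _ (by linarith)
  have P2 : packS (p :: rest) q (r + μ + μ) ≤ c * (r + μ + μ) := hpack q _ (by linarith)
  rcases le_or_gt μ r with h | h
  · have := H r
    nlinarith
  obtain ⟨z, hz⟩ := packS_snoc p w (greedyScan μ p rest)
  have h1 := H (r + μ)
  have h2 := scan_long μ hμ q r hr rest p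
  have h3 := sbl_nonneg (z, w) q (r + μ)
  have h4 := sbl_le_two (z, w) q r hr
  rw [hz] at h1 ⊢
  obtain ⟨X, hX⟩ : ∃ X, X = packS (p :: greedyScan μ p rest) q (r + μ) := ⟨_, rfl⟩
  obtain ⟨Y, hY⟩ : ∃ Y, Y = packS (p :: greedyScan μ p rest) q r := ⟨_, rfl⟩
  rw [← hX] at h1 h2
  rw [← hY] at h2 ⊢
  rcases le_or_gt μ (2 * r) with h' | h'
  · have h5 := sbl_long (z, w) q r μ hμ hr (Or.inr h')
    refine le_of_mul_le_mul_right ?_ hμ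
    have h6 : 2 * r * (X + segBallLength (z, w) q (r + μ)) ≤ 2 * r * (c * (3 * μ)) := by
      gcongr
      nlinarith
    nlinarith
  · have h6 : 2 * r * X ≤ 2 * r * (c * (5 / 2 * μ)) := by
      gcongr
      nlinarith
    have h7 : Y ≤ 5 * c * r := by
      refine le_of_mul_le_mul_right ?_ hμ
      nlinarith
    nlinarith

/-- For `μ > 0`, `c > 0` and a `c`-packed polygonal curve `π` in `ℝ^d`
(given by its nonempty vertex list `l`), the greedy `μ`-simplification `simpl(π,μ)` is
`6c`-packed. -/
theorem simpl_packed {d : ℕ} (μ c : ℝ) (hμ : 0 < μ) (hc : 0 < c)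
    (l : List (Pt d)) (hl : l ≠ []) (hpack : CPacked c l) :
    CPacked (6 * c) (simplList μ l) := by
  cases l with
  | nil => exact absurd rfl hl
  | cons p rest =>
    intro q r hr
    obtain ⟨w, hw, h⟩ := simpl_form μ p rest
    have hb := main_bound μ c hμ hc p w rest hpack hw q r hr
    change packS _ q r ≤ _
    rcases h with h | h
    · rw [h]
      obtain ⟨z, hz⟩ := packS_snoc p w (greedyScan μ p rest)
      rw [hz] at hb
      linarith [sbl_nonneg (z, w) q r]
    · rw [h]; exact hb
end

section
/- Let K : [0,1] → ℝ^d be a continuous curve and let Q = q_1 q_2 … q_m be a polygonal curve in ℝ^d. Then for every s > d_F(K,Q) there exist parameters 0 = t_1 ≤ t_2 ≤ … ≤ t_m = 1 such that d_F(K|[t_i, t_{i+1}], seg(q_i, q_{i+1})) ≤ s for every 1 ≤ i ≤ m−1. -/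
open scoped BigOperators

lemma frechetPieces_bound {d : ℕ} (P R : ℝ → Pt d) (α β : ℝ → ℝ) (hα : IsReparam α)
    (hβ : IsReparam β) (c : ℝ)
    (h : ∀ t ∈ Set.Icc (0:ℝ) 1, dist (P (α t)) (R (β t)) ≤ c) : frechetDist P R ≤ c := by
  have h1 : (⨆ t : Set.Icc (0:ℝ) 1, dist (P (α (t : ℝ))) (R (β (t : ℝ)))) ≤ c := by
    haveI : Nonempty (Set.Icc (0:ℝ) 1) := ⟨⟨0, by simp⟩⟩
    exact ciSup_le fun t => h t t.2
  refine le_trans (csInf_le ⟨0, ?_⟩ ⟨α, β, hα, hβ, rfl⟩) h1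
  rintro r ⟨a, b, -, -, rfl⟩
  exact Real.iSup_nonneg fun t => dist_nonneg

lemma frechetPieces_mem {α : ℝ → ℝ} (hα : IsReparam α) {t : ℝ} (ht : t ∈ Set.Icc (0:ℝ) 1) :
    α t ∈ Set.Icc (0:ℝ) 1 := by
  constructor
  · rw [← hα.map_zero]; exact hα.monotoneOn (by simp) ht ht.1
  · rw [← hα.map_one]; exact hα.monotoneOn ht (by simp) ht.2

lemma frechetPieces_seg {d : ℕ} (m : ℕ) (hm : 2 ≤ m) (q : ℕ → Pt d) (Q : ℝ → Pt d)
    (hQ : IsPolygonalParam m q Q) (i : ℕ) (hi : i + 1 < m) (y : ℝ)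
    (hy : y ∈ Set.Icc (0:ℝ) 1) :
    Q (((i : ℝ) + y) / ((m : ℝ) - 1)) = seg (q i) (q (i + 1)) y := by
  have hm' : (2:ℝ) ≤ m := by exact_mod_cast hm
  have hpos : (0:ℝ) < (m:ℝ) - 1 := by linarith
  have h1 := hQ.1 i (by omega)
  have h2 := hQ.1 (i+1) hi
  push_cast at h2
  have h3 := hQ.2 i hi (((i : ℝ) + y) / ((m : ℝ) - 1)) ⟨by gcongr; linarith [hy.1], by gcongr; exact hy.2⟩
  rw [h1, h2] at h3
  have h4 : (((i : ℝ) + y) / ((m : ℝ) - 1) - (i : ℝ) / ((m : ℝ) - 1)) /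
      (((i : ℝ) + 1) / ((m : ℝ) - 1) - (i : ℝ) / ((m : ℝ) - 1)) = y := by
    rw [← sub_div, ← sub_div, add_sub_cancel_left, add_sub_cancel_left]
    field_simp
  rw [h3, h4, seg]
  module

lemma frechetPieces_Qbdd {d : ℕ} (m : ℕ) (hm : 2 ≤ m) (q : ℕ → Pt d) (Q : ℝ → Pt d)
    (hQ : IsPolygonalParam m q Q) (x : ℝ) (hx : x ∈ Set.Icc (0:ℝ) 1) :
    ‖Q x‖ ≤ ∑ i ∈ Finset.range m, (‖q i‖ + ‖q (i + 1)‖) := by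
  have hm' : (2:ℝ) ≤ m := by exact_mod_cast hm
  have hpos : (0:ℝ) < (m:ℝ) - 1 := by linarith
  obtain ⟨i, hi, y, hy, hxy⟩ : ∃ i : ℕ, i + 1 < m ∧ ∃ y ∈ Set.Icc (0:ℝ) 1,
      x = ((i : ℝ) + y) / ((m : ℝ) - 1) := by
    have hz0 : 0 ≤ x * ((m:ℝ) - 1) := mul_nonneg hx.1 hpos.le
    rcases eq_or_lt_of_le hx.2 with h | h
    · refine ⟨m - 2, by omega, 1, by simp, ?_⟩
      rw [Nat.cast_sub hm, h, eq_div_iff hpos.ne']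
      push_cast; ring
    · refine ⟨⌊x * ((m:ℝ) - 1)⌋₊, ?_, x * ((m:ℝ) - 1) - ⌊x * ((m:ℝ) - 1)⌋₊, ⟨?_, ?_⟩, ?_⟩
      · have h1 : (⌊x * ((m:ℝ) - 1)⌋₊ : ℝ) < (m:ℝ) - 1 :=
          lt_of_le_of_lt (Nat.floor_le hz0) (by nlinarith)
        have : ((⌊x * ((m:ℝ) - 1)⌋₊ + 1 : ℕ) : ℝ) < m := by push_cast; linarith
        exact_mod_cast this
      · linarith [Nat.floor_le hz0]
      · linarith [Nat.lt_floor_add_one (x * ((m:ℝ) - 1))]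
      · rw [eq_div_iff hpos.ne']; ring
  rw [hxy, frechetPieces_seg m hm q Q hQ i hi y hy, seg]
  have h1 : ‖(1 - y) • q i + y • q (i+1)‖ ≤ ‖q i‖ + ‖q (i+1)‖ := by
    refine (norm_add_le _ _).trans ?_
    rw [norm_smul, norm_smul, Real.norm_of_nonneg (by linarith [hy.2]), Real.norm_of_nonneg hy.1]
    exact add_le_add (mul_le_of_le_one_left (norm_nonneg _) (by linarith [hy.1]))
      (mul_le_of_le_one_left (norm_nonneg _) hy.2)
  refine h1.trans ?_
  exact Finset.single_le_sum (f := fun i => ‖q i‖ + ‖q (i + 1)‖)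
    (fun j _ => by positivity) (Finset.mem_range.2 (by omega))

/-- Let `K : [0,1] → ℝ^d` be continuous and `Q = q_1 … q_m` a polygonal
curve. For every `s > d_F(K,Q)` there exist `0 = t_1 ≤ … ≤ t_m = 1` (here `0`-indexed) with
`d_F(K|[t_i, t_{i+1}], seg(q_i, q_{i+1})) ≤ s` for every `i`. -/
theorem frechet_pieces_exist {d : ℕ} (m : ℕ) (hm : 2 ≤ m)
    (K : ℝ → Pt d) (hK : ContinuousOn K (Set.Icc 0 1))
    (q : ℕ → Pt d) (Q : ℝ → Pt d) (hQ : IsPolygonalParam m q Q)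
    (s : ℝ) (hs : frechetDist K Q < s) :
    ∃ t : ℕ → ℝ, t 0 = 0 ∧ t (m - 1) = 1 ∧
      (∀ i j, i ≤ j → j ≤ m - 1 → t i ≤ t j) ∧
      ∀ i, i + 1 < m →
        frechetDist (subcurve K (t i) (t (i + 1))) (seg (q i) (q (i + 1))) ≤ s := by
  have hm' : (2:ℝ) ≤ m := by exact_mod_cast hm
  have hpos : (0:ℝ) < (m:ℝ) - 1 := by linarith
  have hne : {r : ℝ | ∃ α β : ℝ → ℝ, IsReparam α ∧ IsReparam β ∧
      r = ⨆ t : Set.Icc (0:ℝ) 1, dist (K (α (t : ℝ))) (Q (β (t : ℝ)))}.Nonempty := by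
    have hid : IsReparam (fun x => x) :=
      ⟨continuousOn_id, fun a _ b _ h => h, rfl, rfl⟩
    exact ⟨_, _, _, hid, hid, rfl⟩
  obtain ⟨r, ⟨α, β, hα, hβ, rfl⟩, hr⟩ := exists_lt_of_csInf_lt hne hs
  have hdist : ∀ w ∈ Set.Icc (0:ℝ) 1, dist (K (α w)) (Q (β w)) ≤ s := by
    intro w hw
    obtain ⟨C, hC⟩ := isCompact_Icc.exists_bound_of_continuousOn hK
    have hb : BddAbove (Set.range fun t : Set.Icc (0:ℝ) 1 =>
        dist (K (α (t : ℝ))) (Q (β (t : ℝ)))) := by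
      refine ⟨C + ∑ i ∈ Finset.range m, (‖q i‖ + ‖q (i + 1)‖), ?_⟩
      rintro _ ⟨t, rfl⟩
      refine (dist_le_norm_add_norm _ _).trans (add_le_add ?_ ?_)
      · exact hC _ (frechetPieces_mem hα t.2)
      · exact frechetPieces_Qbdd m hm q Q hQ _ (frechetPieces_mem hβ t.2)
    exact (le_ciSup hb ⟨w, hw⟩).trans hr.le
  have hu : ∀ i : ℕ, ∃ u ∈ Set.Icc (0:ℝ) 1, i ≤ m - 1 →
      β u = (i:ℝ) / ((m:ℝ) - 1) ∧ (i = 0 → u = 0) ∧ (i = m - 1 → u = 1) := by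
    intro i
    by_cases h0 : i = 0
    · refine ⟨0, by simp, fun _ => ⟨by simp [h0, hβ.map_zero], fun _ => rfl, fun h => by omega⟩⟩
    by_cases h1 : i = m - 1
    · refine ⟨1, by simp, fun _ => ⟨?_, fun h => by omega, fun _ => rfl⟩⟩
      rw [h1, Nat.cast_sub (by omega), hβ.map_one, Nat.cast_one, div_self hpos.ne']
    by_cases h2 : i ≤ m - 1
    · have h3 : (i:ℝ) ≤ (m:ℝ) - 1 := by
        have : ((i + 1 : ℕ) : ℝ) ≤ m := by exact_mod_cast (by omega : i + 1 ≤ m)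
        push_cast at this; linarith
      have h4 := intermediate_value_Icc (zero_le_one' ℝ) hβ.continuousOn
      rw [hβ.map_zero, hβ.map_one] at h4
      obtain ⟨u, hu, hu'⟩ := h4 (show (i:ℝ) / ((m:ℝ) - 1) ∈ Set.Icc (0:ℝ) 1 from
        ⟨by positivity, (div_le_one hpos).2 h3⟩)
      exact ⟨u, hu, fun _ => ⟨hu', fun h => by omega, fun h => by omega⟩⟩
    · exact ⟨0, by simp, fun h => absurd h h2⟩
  choose u hu01 hu using hu
  have humono : ∀ i j, i ≤ j → j ≤ m - 1 → u i ≤ u j := by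
    intro i j hij hj
    rcases eq_or_lt_of_le hij with rfl | hlt
    · exact le_rfl
    by_contra hcon
    have h1 := hβ.monotoneOn (hu01 j) (hu01 i) (not_le.1 hcon).le
    rw [(hu j hj).1, (hu i (by omega)).1, div_le_div_iff_of_pos_right hpos] at h1
    have : j ≤ i := by exact_mod_cast h1
    omega
  have htm : ∀ i j, i ≤ j → j ≤ m - 1 → α (u i) ≤ α (u j) := fun i j hij hj =>
    hα.monotoneOn (hu01 i) (hu01 j) (humono i j hij hj)
  refine ⟨fun i => α (u i), ?_, ?_, htm, ?_⟩
  · simp only [(hu 0 (by omega)).2.1 rfl, hα.map_zero]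
  · simp only [(hu (m - 1) le_rfl).2.2 rfl, hα.map_one]
  intro i hi
  have hui := humono i (i+1) (by omega) (by omega)
  have hti := htm i (i+1) (by omega) (by omega)
  have hb0 := (hu i (by omega)).1
  have hb1 := (hu (i+1) (by omega)).1
  set w : ℝ → ℝ := fun τ => u i + τ * (u (i+1) - u i) with hw
  have hwmem : ∀ τ ∈ Set.Icc (0:ℝ) 1, w τ ∈ Set.Icc (u i) (u (i+1)) := by
    intro τ hτ
    simp only [hw]
    exact ⟨by nlinarith [hτ.1], by nlinarith [hτ.2]⟩
  have hw01 : Set.MapsTo w (Set.Icc (0:ℝ) 1) (Set.Icc (0:ℝ) 1) := fun τ hτ =>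
    ⟨(hu01 i).1.trans (hwmem τ hτ).1, (hwmem τ hτ).2.trans (hu01 (i+1)).2⟩
  have hwc : ContinuousOn w (Set.Icc (0:ℝ) 1) := by
    apply Continuous.continuousOn; simp only [hw]; fun_prop
  have hwm : Monotone w := by
    intro a b hab
    simp only [hw]
    nlinarith
  have hw0 : w 0 = u i := by simp [hw]
  have hw1 : w 1 = u (i+1) := by simp [hw]
  -- the reparametrization of the segment
  have hβ' : IsReparam (fun τ => β (w τ) * ((m:ℝ) - 1) - i) := by
    refine ⟨?_, ?_, ?_, ?_⟩
    · exact ((hβ.continuousOn.comp hwc hw01).mul continuousOn_const).sub continuousOn_const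
    · intro a ha b hb hab
      have := hβ.monotoneOn (hw01 ha) (hw01 hb) (hwm hab)
      simp only
      nlinarith
    · simp only [hw0, hb0]; field_simp; ring
    · simp only [hw1, hb1]; push_cast; field_simp; ring
  have hα' : ∃ a : ℝ → ℝ, IsReparam a ∧ ∀ τ ∈ Set.Icc (0:ℝ) 1,
      α (u i) + a τ * (α (u (i+1)) - α (u i)) = α (w τ) := by
    rcases eq_or_lt_of_le hti with heq | hlt
    · refine ⟨fun x => x, ⟨continuousOn_id, fun a _ b _ h => h, rfl, rfl⟩, ?_⟩
      intro τ hτ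
      have h1 := hα.monotoneOn (hu01 i) (hw01 hτ) (hwmem τ hτ).1
      have h2 := hα.monotoneOn (hw01 hτ) (hu01 (i+1)) (hwmem τ hτ).2
      rw [← heq] at h2 ⊢
      linarith
    · have hp : 0 < α (u (i+1)) - α (u i) := sub_pos.2 hlt
      refine ⟨fun τ => (α (w τ) - α (u i)) / (α (u (i+1)) - α (u i)), ⟨?_, ?_, ?_, ?_⟩, ?_⟩
      · exact ((hα.continuousOn.comp hwc hw01).sub continuousOn_const).div_const _
      · intro a ha b hb hab
        have := hα.monotoneOn (hw01 ha) (hw01 hb) (hwm hab)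
        simp only
        gcongr
      · simp [hw0]
      · simp only [hw1]; exact div_self hp.ne'
      · intro τ hτ
        simp only
        rw [div_mul_cancel₀ _ hp.ne']; ring
  obtain ⟨a, ha, haw⟩ := hα'
  refine frechetPieces_bound _ _ a _ ha hβ' s ?_
  intro τ hτ
  have hy := frechetPieces_mem hβ' hτ
  rw [← frechetPieces_seg m hm q Q hQ i hi _ hy]
  simp only [subcurve]
  rw [haw τ hτ]
  have : ((i:ℝ) + (β (w τ) * ((m:ℝ) - 1) - i)) / ((m:ℝ) - 1) = β (w τ) := by
    rw [add_sub_cancel, mul_div_cancel_right₀ _ hpos.ne']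
  rw [this]
  exact hdist _ (hw01 hτ)
end

section
/- Let K : [0,1] → ℝ^d be a continuous curve and let a ≤ b ≤ c ≤ e be parameters in [0,1] such that K is affine-linear on [a,b] (i.e., K(x) = K(a) + ((x−a)/(b−a))·(K(b)−K(a)) for x ∈ [a,b], with K constant on [a,b] if a = b) and affine-linear on [c,e]. Then d_F( K|[b,e], K|[a,c] ) ≤ max( ‖K(a) − K(b)‖, ‖K(c) − K(e)‖ ). -/
open scoped BigOperators

theorem exists_reparam_of_monotone (f : ℝ → ℝ) (hf : Continuous f) (hm : Monotone f) (p q : ℝ)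
    (h0 : f 0 = p) (h1 : f 1 = q) :
    ∃ α : ℝ → ℝ, IsReparam α ∧ ∀ t ∈ Set.Icc (0:ℝ) 1, p + α t * (q - p) = f t := by
  have hpq : p ≤ q := by rw [← h0, ← h1]; exact hm zero_le_one
  rcases hpq.eq_or_lt with h | h
  · refine ⟨id, ⟨continuousOn_id, monotone_id.monotoneOn _, rfl, rfl⟩, ?_⟩
    intro t ht
    have e1 := hm ht.1
    have e2 := hm ht.2
    subst h
    simp only [sub_self, mul_zero, add_zero]
    linarith
  · have hpos : 0 < q - p := sub_pos.2 h
    refine ⟨fun t => (f t - p) / (q - p), ⟨?_, ?_, ?_, ?_⟩, ?_⟩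
    · exact ((hf.sub continuous_const).div_const _).continuousOn
    · intro x _ y _ hxy
      have := hm hxy
      simp only
      gcongr
    · simp [h0]
    · simp only [h1]
      exact div_self hpos.ne'
    · intro t _
      simp only
      field_simp
      ring

theorem affine_dist_left {d : ℕ} {K : ℝ → Pt d} {a b : ℝ} (h : AffineOn K a b) {x : ℝ}
    (hx : x ∈ Set.Icc a b) : dist (K x) (K a) ≤ dist (K a) (K b) := by
  have hab : 0 ≤ b - a := by linarith [hx.1, hx.2]
  rw [h x hx, dist_comm (K a) (K b), dist_eq_norm, dist_eq_norm, add_sub_cancel_left, norm_smul,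
    Real.norm_eq_abs, abs_of_nonneg (div_nonneg (by linarith [hx.1]) hab)]
  exact mul_le_of_le_one_left (norm_nonneg _)
    (div_le_one_of_le₀ (by linarith [hx.2]) hab)

theorem affine_dist_right {d : ℕ} {K : ℝ → Pt d} {a b : ℝ} (h : AffineOn K a b) {x : ℝ}
    (hx : x ∈ Set.Icc a b) : dist (K b) (K x) ≤ dist (K a) (K b) := by
  rcases (hx.1.trans hx.2).eq_or_lt with e | e
  · have : x = b := le_antisymm hx.2 (e ▸ hx.1)
    rw [this, dist_self]
    exact dist_nonneg
  have hab : 0 < b - a := sub_pos.2 e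
  have key : K b - K x = ((b - x) / (b - a)) • (K b - K a) := by
    have h3 : (b - x) / (b - a) = 1 - (x - a) / (b - a) := by
      field_simp
      ring
    rw [h x hx, h3, sub_smul, one_smul]
    abel
  rw [dist_comm (K a) (K b), dist_eq_norm, dist_eq_norm, key, norm_smul,
    Real.norm_eq_abs, abs_of_nonneg (div_nonneg (by linarith [hx.2]) hab.le)]
  exact mul_le_of_le_one_left (norm_nonneg _)
    (div_le_one_of_le₀ (by linarith [hx.1]) hab.le)

/-- Let `K : [0,1] → ℝ^d` be continuous and `a ≤ b ≤ c ≤ e` in `[0,1]` with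
`K` affine-linear on `[a,b]` and on `[c,e]`. Then
`d_F(K|[b,e], K|[a,c]) ≤ max (‖K a − K b‖, ‖K c − K e‖)`. -/
theorem frechet_shift_le {d : ℕ} (K : ℝ → Pt d) (hK : ContinuousOn K (Set.Icc 0 1))
    (a b c e : ℝ) (hab : a ≤ b) (hbc : b ≤ c) (hce : c ≤ e)
    (ha : 0 ≤ a) (he : e ≤ 1)
    (h1 : AffineOn K a b) (h2 : AffineOn K c e) :
    frechetDist (subcurve K b e) (subcurve K a c) ≤
      max (dist (K a) (K b)) (dist (K c) (K e)) := by
  have hae : 0 ≤ e - a := by linarith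
  have hsm : Monotone (fun t : ℝ => a + t * (e - a)) := fun x y hxy => by
    simp only
    gcongr
  obtain ⟨α, hα, hα'⟩ := exists_reparam_of_monotone (fun t => max (a + t * (e - a)) b)
    (by fun_prop) (hsm.max monotone_const) b e (by simp [hab]) (by simp; linarith)
  obtain ⟨β, hβ, hβ'⟩ := exists_reparam_of_monotone (fun t => min (a + t * (e - a)) c)
    (by fun_prop) (hsm.min monotone_const) a c (by simp; linarith) (by simp; linarith)
  unfold frechetDist
  refine le_trans (csInf_le (⟨0, ?_⟩ : BddBelow _) (Set.mem_ofPred.2 ⟨α, β, hα, hβ, rfl⟩)) ?_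
  · rintro r ⟨_, _, _, _, rfl⟩
    exact Real.iSup_nonneg fun _ => dist_nonneg
  · have : Nonempty (Set.Icc (0:ℝ) 1) := ⟨⟨0, by simp⟩⟩
    refine ciSup_le ?_
    rintro ⟨t, ht⟩
    simp only [subcurve]
    rw [hα' t ht, hβ' t ht]
    have s1 : a ≤ a + t * (e - a) := by nlinarith [ht.1]
    have s2 : a + t * (e - a) ≤ e := by nlinarith [ht.2]
    generalize a + t * (e - a) = s at s1 s2
    rcases le_total s b with h | h
    · rw [max_eq_right h, min_eq_left (h.trans hbc)]
      exact (affine_dist_right h1 ⟨s1, h⟩).trans (le_max_left _ _)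
    · rw [max_eq_left h]
      rcases le_total s c with h' | h'
      · rw [min_eq_left h', dist_self]
        exact dist_nonneg.trans (le_max_left _ _)
      · rw [min_eq_right h']
        exact (affine_dist_left h2 ⟨h', s2⟩).trans (le_max_right _ _)
end

section
/- There exists a constant C depending only on d such that the following holds. Given a finite set P of n points in ℝ^d and any 0 < ε < 1, there exists a set Z of at most C·n/ε^d nonnegative real numbers such that for any two distinct points p, q ∈ P there exist x, x' ∈ Z with x ≤ ‖p − q‖ ≤ x' ≤ (1+ε)·x. -/
open scoped BigOperators

/-- Farthest-first traversal: every distance is comparable to one of at most `|P|` values. -/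
lemma exists_scales {X : Type*} [MetricSpace X] (P : Finset X) :
    ∃ L : Finset ℝ, L.card ≤ P.card ∧ (∀ l ∈ L, 0 ≤ l) ∧
      ∀ p ∈ P, ∀ q ∈ P, p ≠ q → ∃ l ∈ L, dist p q / 4 < l ∧ l ≤ 3 / 2 * dist p q := by
  classical
  rcases P.eq_empty_or_nonempty with rfl | hP
  · exact ⟨∅, by simp⟩
  obtain ⟨p0, hp0⟩ := id hP
  have hfar : ∀ A : Finset X, ∃ x ∈ P, ∀ y ∈ P,
      Metric.infDist y (A : Set X) ≤ Metric.infDist x (A : Set X) :=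
    fun A => P.exists_max_image (fun y => Metric.infDist y (A : Set X)) hP
  choose far hfarP hfar using hfar
  obtain ⟨A, hA0, hAs⟩ : ∃ A : ℕ → Finset X, A 0 = {p0} ∧
      ∀ n, A (n + 1) = insert (far (A n)) (A n) :=
    ⟨fun n => Nat.rec {p0} (fun _ B => insert (far B) B) n, rfl, fun n => rfl⟩
  let l : ℕ → ℝ := fun n => Metric.infDist (far (A n)) (↑(A n) : Set X)
  have hne : ∀ n, (A n).Nonempty := by
    intro n
    cases n with
    | zero => rw [hA0]; simp
    | succ n => rw [hAs]; simp
  have hsub : ∀ n, A n ⊆ P := by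
    intro n
    induction n with
    | zero => rw [hA0]; simpa using hp0
    | succ n ih => rw [hAs]; exact Finset.insert_subset (hfarP _) ih
  have hcard : ∀ n, l n = 0 ∨ n + 2 ≤ (A (n + 1)).card := by
    intro n
    by_cases h0 : l n = 0
    · exact Or.inl h0
    right
    -- all previous values are nonzero as well
    have key : ∀ m, ∀ x ∈ A m, ∀ k, m ≤ k → x ∈ A k := by
      intro m x hx k hk
      induction k, hk using Nat.le_induction with
      | base => exact hx
      | succ k _ ih => rw [hAs]; exact Finset.mem_insert_of_mem ih
    have hpos : ∀ m ≤ n, far (A m) ∉ A m := by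
      intro m hm hmem
      have h1 : l m = 0 := Metric.infDist_zero_of_mem (by simpa using hmem)
      have h2 : ∀ y ∈ P, y ∈ A m := by
        intro y hy
        have h3 : Metric.infDist y (↑(A m) : Set X) = 0 :=
          le_antisymm ((hfar (A m) y hy).trans h1.le) Metric.infDist_nonneg
        have := ((A m).finite_toSet.isClosed.mem_iff_infDist_zero (by simpa using hne m)).2 h3
        simpa using this
      apply h0
      exact Metric.infDist_zero_of_mem (by simpa using key m _ (h2 _ (hfarP _)) n hm)
    have : ∀ m ≤ n, m + 2 ≤ (A (m + 1)).card := by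
      intro m hm
      induction m with
      | zero =>
        rw [hAs, Finset.card_insert_of_notMem (hpos 0 hm), hA0]; simp
      | succ m ih =>
        rw [hAs, Finset.card_insert_of_notMem (hpos _ hm)]
        have := ih (by omega)
        omega
    exact this n le_rfl
  have hlP : l P.card = 0 := by
    rcases hcard P.card with h | h
    · exact h
    · have := Finset.card_le_card (hsub (P.card + 1)); omega
  have hpair : ∀ n, ∀ a ∈ A n, ∀ b ∈ A n, a ≠ b → ∃ m < n, l m ≤ dist a b := by
    intro n
    induction n with
    | zero =>
      intro a ha b hb hab
      rw [hA0, Finset.mem_singleton] at ha hb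
      exact absurd (ha.trans hb.symm) hab
    | succ n ih =>
      intro a ha b hb hab
      rw [hAs, Finset.mem_insert] at ha hb
      rcases ha with rfl | ha
      · rcases hb with rfl | hb
        · exact absurd rfl hab
        · exact ⟨n, by omega, Metric.infDist_le_dist_of_mem (by simpa using hb)⟩
      · rcases hb with rfl | hb
        · refine ⟨n, by omega, ?_⟩
          rw [dist_comm]
          exact Metric.infDist_le_dist_of_mem (by simpa using ha)
        · obtain ⟨m, hm, h⟩ := ih a ha b hb hab
          exact ⟨m, by omega, h⟩
  refine ⟨(Finset.range P.card).image l, ?_, ?_, ?_⟩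
  · exact Finset.card_image_le.trans (by simp)
  · intro x hx
    obtain ⟨m, _, rfl⟩ := Finset.mem_image.1 hx
    exact Metric.infDist_nonneg
  · intro p hp q hq hpq
    have hD : 0 < dist p q := dist_pos.2 hpq
    have hex : ∃ n, l n ≤ dist p q / 4 := ⟨P.card, by rw [hlP]; positivity⟩
    have hn : l (Nat.find hex) ≤ dist p q / 4 := Nat.find_spec hex
    have hnP : Nat.find hex ≤ P.card := Nat.find_min' hex (by rw [hlP]; positivity)
    have hmin : ∀ m < Nat.find hex, dist p q / 4 < l m :=
      fun m hm => not_le.1 (Nat.find_min hex hm)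
    generalize Nat.find hex = n at hn hnP hmin
    have hcov : ∀ y ∈ P, ∃ a ∈ A n, dist y a ≤ dist p q / 4 := by
      intro y hy
      obtain ⟨a, ha, h⟩ := (A n).finite_toSet.isCompact.exists_infDist_eq_dist
        (by simpa using hne n) y
      exact ⟨a, by simpa using ha, by rw [← h]; exact (hfar (A n) y hy).trans hn⟩
    obtain ⟨a, ha, hpa⟩ := hcov p hp
    obtain ⟨b, hb, hqb⟩ := hcov q hq
    have hab : a ≠ b := by
      rintro rfl
      have := dist_triangle_right p q a
      linarith
    obtain ⟨m, hm, h⟩ := hpair n a ha b hb hab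
    refine ⟨l m, Finset.mem_image_of_mem _ (by simp; omega), hmin m hm, ?_⟩
    have h1 := dist_triangle4 a p q b
    rw [dist_comm a p] at h1
    linarith

/-- There is a constant `C` depending only on `d` such that: for every
finite set `P` of points in `ℝ^d` and every `0 < ε < 1` there is a set `Z` of at most
`C·|P|/ε^d` nonnegative reals such that every pairwise distance of `P` is sandwiched as
`x ≤ ‖p − q‖ ≤ x' ≤ (1+ε)·x` for some `x, x' ∈ Z`. -/
theorem approx_distance_selection (d : ℕ) :
    ∃ C : ℝ, 0 < C ∧ ∀ (P : Finset (Pt d)) (ε : ℝ), 0 < ε → ε < 1 →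
      ∃ Z : Finset ℝ, (Z.card : ℝ) ≤ C * P.card / ε ^ d ∧ (∀ x ∈ Z, 0 ≤ x) ∧
        ∀ p ∈ P, ∀ q ∈ P, p ≠ q →
          ∃ x ∈ Z, ∃ x' ∈ Z, x ≤ dist p q ∧ dist p q ≤ x' ∧ x' ≤ (1 + ε) * x := by
  classical
  refine ⟨34, by norm_num, ?_⟩
  intro P ε hε hε1
  rcases Nat.eq_zero_or_pos d with rfl | hd
  · refine ⟨∅, by simp, by simp, ?_⟩
    intro p _ q _ hpq
    exact absurd (Subsingleton.elim p q) hpq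
  obtain ⟨L, hLc, hL0, hL⟩ := exists_scales P
  refine ⟨(L ×ˢ Finset.range (⌊32 / ε⌋₊ + 2)).image (fun z => (z.2 : ℝ) * (ε * z.1 / 8)),
    ?_, ?_, ?_⟩
  · have h1 : ((L ×ˢ Finset.range (⌊32 / ε⌋₊ + 2)).image
        (fun z => (z.2 : ℝ) * (ε * z.1 / 8))).card ≤ P.card * (⌊32 / ε⌋₊ + 2) := by
      refine Finset.card_image_le.trans ?_
      rw [Finset.card_product, Finset.card_range]
      exact Nat.mul_le_mul_right _ hLc
    have h2 : ((⌊32 / ε⌋₊ : ℝ)) ≤ 32 / ε := Nat.floor_le (by positivity)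
    have h3 : (2 : ℝ) ≤ 2 / ε := by
      rw [le_div_iff₀ hε]; linarith
    have h4 : 34 / ε ≤ 34 / ε ^ d := by
      apply div_le_div_of_nonneg_left (by norm_num) (by positivity)
      exact pow_le_of_le_one hε.le hε1.le (by omega)
    have h5 : (32 / ε + 2 / ε : ℝ) = 34 / ε := by ring
    calc _ ≤ ((P.card * (⌊32 / ε⌋₊ + 2) : ℕ) : ℝ) := by exact_mod_cast h1
      _ = (P.card : ℝ) * ((⌊32 / ε⌋₊ : ℝ) + 2) := by push_cast; ring
      _ ≤ (P.card : ℝ) * (34 / ε ^ d) := by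
        apply mul_le_mul_of_nonneg_left _ (by positivity)
        linarith
      _ = 34 * P.card / ε ^ d := by ring
  · intro x hx
    obtain ⟨z, hz, rfl⟩ := Finset.mem_image.1 hx
    have := hL0 z.1 (Finset.mem_product.1 hz).1
    positivity
  · intro p hp q hq hpq
    obtain ⟨l, hl, h1, h2⟩ := hL p hp q hq hpq
    have hD : 0 < dist p q := dist_pos.2 hpq
    generalize dist p q = D at h1 h2 hD
    have hl0 : 0 < l := by linarith
    have hs : 0 < ε * l / 8 := by positivity
    have hf1 : (⌊D / (ε * l / 8)⌋₊ : ℝ) ≤ D / (ε * l / 8) := Nat.floor_le (by positivity)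
    have hf2 : D / (ε * l / 8) < (⌊D / (ε * l / 8)⌋₊ : ℝ) + 1 := Nat.lt_floor_add_one _
    have hk : ⌊D / (ε * l / 8)⌋₊ ≤ ⌊32 / ε⌋₊ := by
      apply Nat.floor_le_floor
      rw [div_le_div_iff₀ hs hε]
      nlinarith
    generalize ⌊D / (ε * l / 8)⌋₊ = k at hf1 hf2 hk
    rw [le_div_iff₀ hs] at hf1
    rw [div_lt_iff₀ hs] at hf2
    refine ⟨(k : ℝ) * (ε * l / 8), Finset.mem_image.2 ⟨(l, k), ?_, rfl⟩,
      ((k + 1 : ℕ) : ℝ) * (ε * l / 8), Finset.mem_image.2 ⟨(l, k + 1), ?_, rfl⟩, hf1, ?_, ?_⟩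
    · simp only [Finset.mem_product, Finset.mem_range]; exact ⟨hl, by omega⟩
    · simp only [Finset.mem_product, Finset.mem_range]; exact ⟨hl, by omega⟩
    · push_cast; exact hf2.le
    · push_cast
      have h3 : ε * l ≤ l := by nlinarith
      have h4 : l / 8 ≤ (k : ℝ) * (ε * l / 8) := by nlinarith
      have h5 := mul_le_mul_of_nonneg_left h4 hε.le
      nlinarith
end

section
/- There exists a constant C depending only on d such that the following holds. Given a finite set P of n points in ℝ^d, there exists a set Z of at most C·n nonnegative real numbers such that for any two distinct points p, q ∈ P there exist x, x' ∈ Z with x ≤ ‖p − q‖ ≤ x' ≤ 2x. -/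
open scoped BigOperators

/-- Processing lacunary scales in increasing order, each one merges two clusters. -/
lemma scales_forest {d : ℕ} (P : Finset (Pt d)) (S : Finset ℤ) :
    (∀ k ∈ S, ∃ p ∈ P, ∃ q ∈ P, (2:ℝ) ^ k ≤ dist p q ∧ dist p q < (2:ℝ) ^ (k + 1)) →
    (∀ k ∈ S, ∀ l ∈ S, k < l → k + 3 ≤ l) →
    ∃ f : Pt d → Pt d, Set.ncard (f '' (P : Set (Pt d))) + S.card ≤ P.card ∧
      ∀ x ∈ P, ∀ y ∈ P, f x = f y → x = y ∨ ∃ k ∈ S, dist x y < (2:ℝ) ^ (k + 2) := by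
  induction S using Finset.induction_on_max with
  | empty =>
    intro _ _
    refine ⟨id, by simp, fun x _ y _ h => Or.inl h⟩
  | insert m S hm ih =>
    intro h1 h2
    obtain ⟨f, hf, hd⟩ := ih (fun k hk => h1 k (Finset.mem_insert_of_mem hk))
      (fun k hk l hl => h2 k (Finset.mem_insert_of_mem hk) l (Finset.mem_insert_of_mem hl))
    obtain ⟨p, hp, q, hq, hpq1, hpq2⟩ := h1 m (Finset.mem_insert_self _ _)
    have hmpos : (0:ℝ) < 2 ^ m := by positivity
    have e1 : (2:ℝ) ^ (m + 1) = 2 * 2 ^ m := by rw [zpow_add₀ two_ne_zero]; norm_num; ring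
    have e2 : (2:ℝ) ^ (m + 2) = 4 * 2 ^ m := by rw [zpow_add₀ two_ne_zero]; norm_num; ring
    have small : ∀ x ∈ P, ∀ y ∈ P, f x = f y → 2 * dist x y < (2:ℝ) ^ m := by
      intro x hx y hy hxy
      rcases hd x hx y hy hxy with h | ⟨k, hk, h⟩
      · simpa [h] using hmpos
      · have hkm : k + 3 ≤ m := h2 k (Finset.mem_insert_of_mem hk) m
          (Finset.mem_insert_self _ _) (hm k hk)
        have h3 : (2:ℝ) ^ (k + 3) ≤ 2 ^ m := zpow_le_zpow_right₀ (by norm_num) hkm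
        have h4 : (2:ℝ) ^ (k + 3) = 2 * 2 ^ (k + 2) := by
          rw [show k + 3 = (k + 2) + 1 by ring, zpow_add₀ two_ne_zero (k+2) 1]; norm_num; ring
        linarith
    have hne : f p ≠ f q := by
      intro h
      have := small p hp q hq h
      have := dist_nonneg (x := p) (y := q)
      linarith
    classical
    refine ⟨fun x => if f x = f q then f p else f x, ?_, ?_⟩
    · have hsub : (fun x => if f x = f q then f p else f x) '' (P : Set (Pt d)) ⊆
          (f '' (P : Set (Pt d))) \ {f q} := by
        rintro _ ⟨x, hx, rfl⟩
        by_cases h : f x = f q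
        · simp only [h, if_true]
          exact ⟨⟨p, hp, rfl⟩, hne⟩
        · simp only [h, if_false]
          exact ⟨⟨x, hx, rfl⟩, h⟩
      have hfin : (f '' (P : Set (Pt d))).Finite := P.finite_toSet.image f
      have c1 := Set.ncard_le_ncard hsub (hfin.subset Set.diff_subset)
      have c2 := Set.ncard_diff_singleton_add_one (s := f '' (P : Set (Pt d)))
        (a := f q) ⟨q, hq, rfl⟩ hfin
      have c3 : (insert m S).card = S.card + 1 :=
        Finset.card_insert_of_notMem (fun h => lt_irrefl _ (hm m h))
      omega
    · intro x hx y hy hxy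
      refine Or.inr ⟨m, Finset.mem_insert_self _ _, ?_⟩
      have cross : ∀ x ∈ P, ∀ y ∈ P, f x = f q → f p = f y → dist x y < 4 * (2:ℝ) ^ m := by
        intro x hx y hy hxq hpy
        have a1 := small x hx q hq hxq
        have a2 := small p hp y hy hpy
        have a3 := dist_triangle4 x q p y
        rw [dist_comm q p] at a3
        linarith
      rw [e2]
      by_cases h : f x = f q <;> by_cases h' : f y = f q
      · have := small x hx y hy (h.trans h'.symm)
        have := dist_nonneg (x := x) (y := y)
        linarith
      · simp only [h, h', if_true, if_false] at hxy
        exact cross x hx y hy h hxy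
      · simp only [h, h', if_true, if_false] at hxy
        rw [dist_comm]
        exact cross y hy x hx h' hxy.symm
      · simp only [h, h', if_false] at hxy
        have := small x hx y hy hxy
        have := dist_nonneg (x := x) (y := y)
        linarith

/-- There is a constant `C` depending only on `d` such that: for every
finite set `P` of points in `ℝ^d` there is a set `Z` of at most `C·|P|` nonnegative reals
such that every pairwise distance of `P` is sandwiched as `x ≤ ‖p − q‖ ≤ x' ≤ 2x` for some
`x, x' ∈ Z`. -/
theorem distance_selection_wspd (d : ℕ) :
    ∃ C : ℝ, 0 < C ∧ ∀ (P : Finset (Pt d)),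
      ∃ Z : Finset ℝ, (Z.card : ℝ) ≤ C * P.card ∧ (∀ x ∈ Z, 0 ≤ x) ∧
        ∀ p ∈ P, ∀ q ∈ P, p ≠ q →
          ∃ x ∈ Z, ∃ x' ∈ Z, x ≤ dist p q ∧ dist p q ≤ x' ∧ x' ≤ 2 * x := by
  refine ⟨6, by norm_num, fun P => ?_⟩
  classical
  let K : Finset ℤ := P.offDiag.image (fun e => Int.log 2 (dist e.1 e.2))
  have hK : ∀ k ∈ K, ∃ p ∈ P, ∃ q ∈ P, (2:ℝ) ^ k ≤ dist p q ∧ dist p q < (2:ℝ) ^ (k + 1) := by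
    intro k hk
    obtain ⟨⟨p, q⟩, he, rfl⟩ := Finset.mem_image.1 hk
    obtain ⟨hp, hq, hpq⟩ := Finset.mem_offDiag.1 he
    exact ⟨p, hp, q, hq, by exact_mod_cast Int.zpow_log_le_self (b := 2) one_lt_two (dist_pos.2 hpq),
      by exact_mod_cast Int.lt_zpow_succ_log_self (b := 2) one_lt_two (dist p q)⟩
  have hr : ∀ r : ℤ, (K.filter (fun k => k % 3 = r)).card ≤ P.card := by
    intro r
    obtain ⟨f, hf, -⟩ := scales_forest P (K.filter (fun k => k % 3 = r))
      (fun k hk => hK k (Finset.mem_filter.1 hk).1)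
      (fun k hk l hl hkl => by
        have a := (Finset.mem_filter.1 hk).2
        have b := (Finset.mem_filter.1 hl).2
        omega)
    omega
  have hcard : K.card ≤ 3 * P.card := by
    have hsub : K ⊆ K.filter (fun k => k % 3 = 0) ∪ K.filter (fun k => k % 3 = 1) ∪
        K.filter (fun k => k % 3 = 2) := by
      intro k hk
      simp only [Finset.mem_union, Finset.mem_filter, hk, true_and]
      omega
    have := Finset.card_le_card hsub
    have := Finset.card_union_le (K.filter (fun k => k % 3 = 0) ∪ K.filter (fun k => k % 3 = 1))
      (K.filter (fun k => k % 3 = 2))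
    have := Finset.card_union_le (K.filter (fun k => k % 3 = 0)) (K.filter (fun k => k % 3 = 1))
    have := hr 0
    have := hr 1
    have := hr 2
    omega
  refine ⟨K.image (fun k => (2:ℝ) ^ k) ∪ K.image (fun k => (2:ℝ) ^ (k + 1)), ?_, ?_, ?_⟩
  · have a := Finset.card_union_le (K.image (fun k => (2:ℝ) ^ k))
      (K.image (fun k => (2:ℝ) ^ (k + 1)))
    have b := Finset.card_image_le (s := K) (f := fun k => (2:ℝ) ^ k)
    have c := Finset.card_image_le (s := K) (f := fun k => (2:ℝ) ^ (k + 1))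
    have : (K.image (fun k => (2:ℝ) ^ k) ∪ K.image (fun k => (2:ℝ) ^ (k + 1))).card
        ≤ 6 * P.card := by omega
    exact_mod_cast this
  · intro x hx
    rcases Finset.mem_union.1 hx with h | h <;> obtain ⟨k, -, rfl⟩ := Finset.mem_image.1 h <;>
      positivity
  · intro p hp q hq hpq
    have hk : Int.log 2 (dist p q) ∈ K :=
      Finset.mem_image.2 ⟨(p, q), Finset.mem_offDiag.2 ⟨hp, hq, hpq⟩, rfl⟩
    refine ⟨_, Finset.mem_union_left _ (Finset.mem_image_of_mem _ hk),
      _, Finset.mem_union_right _ (Finset.mem_image_of_mem _ hk), ?_, ?_, ?_⟩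
    · exact_mod_cast Int.zpow_log_le_self (b := 2) one_lt_two (dist_pos.2 hpq)
    · exact_mod_cast (Int.lt_zpow_succ_log_self (b := 2) one_lt_two (dist p q)).le
    · rw [zpow_add₀ two_ne_zero]; norm_num; rw [mul_comm]
end

section
/- Let P = p_1 … p_n be a polygonal curve in ℝ^d and let 0 < x < x' be real numbers such that no pairwise distance of P lies in the interval (x, x'], i.e. L(P) ∩ (x, x'] = ∅. Then for all μ, μ' ∈ (x, x'], the greedy simplifications simpl(P,μ) and simpl(P,μ') have the same sequence of vertices. -/
open scoped BigOperators

/-- If no distance between two list entries separates the thresholds, the scans agree. -/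
theorem greedyScan_congr_of_pairwise {d : ℕ} (μ μ' : ℝ) (rest : List (Pt d)) :
    ∀ cur : Pt d, (cur :: rest).Pairwise (fun a b => μ ≤ dist a b ↔ μ' ≤ dist a b) →
      greedyScan μ cur rest = greedyScan μ' cur rest := by
  induction rest with
  | nil => intro cur _; rfl
  | cons p rest ih =>
    intro cur h
    rw [List.pairwise_cons] at h
    obtain ⟨h1, h2⟩ := h
    have hp := h1 p (by simp)
    have hskip : (cur :: rest).Pairwise (fun a b => μ ≤ dist a b ↔ μ' ≤ dist a b) :=
      List.pairwise_cons.2 ⟨fun b hb => h1 b (by simp [hb]), (List.pairwise_cons.1 h2).2⟩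
    simp only [greedyScan, hp, ih p h2, ih cur hskip]

/-- Let `P = p_1 … p_n` be a polygonal curve (vertex list `l`) and
`0 < x < x'` with no pairwise distance of `P` in `(x, x']`. Then for all `μ, μ' ∈ (x, x']`
the greedy simplifications `simpl(P,μ)` and `simpl(P,μ')` have the same vertex sequence. -/
theorem simpl_stable {d : ℕ} (l : List (Pt d)) (hl : l ≠ [])
    (x x' : ℝ) (hx : 0 < x) (hxx' : x < x')
    (hgap : ∀ i j, i < j → j < l.length →
      dist (l.getD i 0) (l.getD j 0) ∉ Set.Ioc x x')
    (μ μ' : ℝ) (hμ : μ ∈ Set.Ioc x x') (hμ' : μ' ∈ Set.Ioc x x') :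
    simplList μ l = simplList μ' l := by
  have hpw : l.Pairwise (fun a b => μ ≤ dist a b ↔ μ' ≤ dist a b) := by
    rw [List.pairwise_iff_getElem]
    intro i j hi hj hij
    have h := hgap i j hij hj
    rw [List.getD_eq_getElem _ _ hi, List.getD_eq_getElem _ _ hj] at h
    obtain ⟨h1, h2⟩ := hμ
    obtain ⟨h3, h4⟩ := hμ'
    constructor
    · intro hle
      by_contra hlt
      push Not at hlt
      exact h ⟨by linarith, by linarith⟩
    · intro hle
      by_contra hlt
      push Not at hlt
      exact h ⟨by linarith, by linarith⟩
  cases l with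
  | nil => rfl
  | cons p rest =>
    simp only [simplList, greedyScan_congr_of_pairwise μ μ' rest p hpw]
end

section
/- Let K : [0,1] → ℝ^d be a continuous curve, let Q = q_1 q_2 … q_m be a polygonal curve in ℝ^d, and let r'', η ≥ 0. Suppose there exist parameters 0 = s_1 ≤ s_2 ≤ … ≤ s_m = 1 such that d_F(K|[s_i, s_{i+1}], seg(q_i, q_{i+1})) ≤ r'' for every 1 ≤ i ≤ m−1. Suppose further that t_1, …, t_m ∈ [0,1] satisfy: t_1 = 0, t_m = 1, t_i ≤ s_i ≤ t_{i+1} for all relevant indices, K is affine-linear on each interval [t_i, s_i], and ‖K(t_i) − K(s_i)‖ ≤ η for every i. Then d_F(K|[t_i, t_{i+1}], seg(q_i, q_{i+1})) ≤ r'' + η for every 1 ≤ i ≤ m−1. -/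
open scoped BigOperators

lemma exists_reparam_of_path (T T' : ℝ) (hT : T ≤ T') (p : ℝ → ℝ)
    (hc : ContinuousOn p (Set.Icc 0 1)) (hmono : MonotoneOn p (Set.Icc 0 1))
    (h0 : p 0 = T) (h1 : p 1 = T') :
    ∃ α : ℝ → ℝ, IsReparam α ∧ ∀ x ∈ Set.Icc (0:ℝ) 1, T + α x * (T' - T) = p x := by
  rcases eq_or_lt_of_le hT with h | h
  · refine ⟨id, ⟨continuousOn_id, fun _ _ _ _ h => h, rfl, rfl⟩, ?_⟩
    intro x hx
    have a1 := hmono (Set.left_mem_Icc.2 zero_le_one) hx hx.1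
    have a2 := hmono hx (Set.right_mem_Icc.2 zero_le_one) hx.2
    have : T' - T = 0 := by linarith
    rw [this]
    linarith
  · have hpos : 0 < T' - T := by linarith
    refine ⟨fun x => (p x - T) / (T' - T), ⟨?_, ?_, ?_, ?_⟩, ?_⟩
    · exact (hc.sub continuousOn_const).div_const _
    · intro x hx y hy hxy
      have := hmono hx hy hxy
      exact div_le_div_of_nonneg_right (by linarith) hpos.le
    · simp [h0]
    · simp only [h1]; exact div_self hpos.ne'
    · intro x _
      field_simp
      ring

lemma affineOn_dist_right {d : ℕ} {K : ℝ → Pt d} {a b η : ℝ} (h : AffineOn K a b)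
    (hη : 0 ≤ η) (hd : dist (K a) (K b) ≤ η) {x : ℝ} (hx : x ∈ Set.Icc a b) :
    dist (K x) (K b) ≤ η := by
  rcases eq_or_lt_of_le (hx.1.trans hx.2) with e | hlt
  · have : x = b := le_antisymm hx.2 (e ▸ hx.1)
    simpa [this] using hη
  have hpos : 0 < b - a := by linarith
  have e : K x - K b = (1 - (x - a) / (b - a)) • (K a - K b) := by
    rw [h x hx]; module
  have l1 : (x - a) / (b - a) ≤ 1 := (div_le_one hpos).2 (by linarith [hx.2])
  have l0 : 0 ≤ (x - a) / (b - a) := div_nonneg (by linarith [hx.1]) hpos.le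
  rw [dist_eq_norm] at hd ⊢
  rw [e, norm_smul, Real.norm_of_nonneg (by linarith)]
  nlinarith [norm_nonneg (K a - K b)]

lemma affineOn_dist_left {d : ℕ} {K : ℝ → Pt d} {a b η : ℝ} (h : AffineOn K a b)
    (hη : 0 ≤ η) (hd : dist (K a) (K b) ≤ η) {x : ℝ} (hx : x ∈ Set.Icc a b) :
    dist (K a) (K x) ≤ η := by
  rcases eq_or_lt_of_le (hx.1.trans hx.2) with e | hlt
  · have : x = a := le_antisymm (e ▸ hx.2) hx.1
    simpa [this] using hη
  have hpos : 0 < b - a := by linarith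
  have e : K a - K x = ((x - a) / (b - a)) • (K a - K b) := by
    rw [h x hx]; module
  have l1 : (x - a) / (b - a) ≤ 1 := (div_le_one hpos).2 (by linarith [hx.2])
  have l0 : 0 ≤ (x - a) / (b - a) := div_nonneg (by linarith [hx.1]) hpos.le
  rw [dist_eq_norm] at hd ⊢
  rw [e, norm_smul, Real.norm_of_nonneg l0]
  nlinarith [norm_nonneg (K a - K b)]

lemma IsReparam.mem {α : ℝ → ℝ} (h : IsReparam α) {x : ℝ} (hx : x ∈ Set.Icc (0:ℝ) 1) :
    α x ∈ Set.Icc (0:ℝ) 1 := by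
  constructor
  · rw [← h.map_zero]; exact h.monotoneOn (Set.left_mem_Icc.2 zero_le_one) hx hx.1
  · rw [← h.map_one]; exact h.monotoneOn hx (Set.right_mem_Icc.2 zero_le_one) hx.2

lemma isReparam_id : IsReparam (fun x => x) :=
  ⟨continuousOn_id, fun _ _ _ _ h => h, rfl, rfl⟩

/-- From a bound on the distance we extract almost optimal reparametrizations. -/
lemma exists_reparam_of_frechetDist_le {d : ℕ} (P Q : ℝ → Pt d)
    (hP : ContinuousOn P (Set.Icc 0 1)) (hQ : ContinuousOn Q (Set.Icc 0 1)) {r ε : ℝ}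
    (h : frechetDist P Q ≤ r) (hε : 0 < ε) :
    ∃ α β : ℝ → ℝ, IsReparam α ∧ IsReparam β ∧
      ∀ x ∈ Set.Icc (0:ℝ) 1, dist (P (α x)) (Q (β x)) ≤ r + ε := by
  have hlt : frechetDist P Q < r + ε := by linarith
  unfold frechetDist at hlt
  obtain ⟨b, ⟨α, β, hα, hβ, rfl⟩, hb⟩ := exists_lt_of_csInf_lt
    (by exact ⟨_, _, _, isReparam_id, isReparam_id, rfl⟩) hlt
  refine ⟨α, β, hα, hβ, fun x hx => le_trans ?_ hb.le⟩
  have hcont : ContinuousOn (fun y => dist (P (α y)) (Q (β y))) (Set.Icc (0:ℝ) 1) :=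
    continuous_dist.comp_continuousOn (ContinuousOn.prodMk (hP.comp hα.continuousOn fun y hy => hα.mem hy)
      (hQ.comp hβ.continuousOn fun y hy => hβ.mem hy))
  obtain ⟨C, hC⟩ := isCompact_Icc.bddAbove_image hcont
  refine le_ciSup (f := fun y : Set.Icc (0:ℝ) 1 => dist (P (α (y : ℝ))) (Q (β (y : ℝ))))
    ⟨C, ?_⟩ ⟨x, hx⟩
  rintro _ ⟨y, rfl⟩
  exact hC ⟨y, y.2, rfl⟩

lemma frechetDist_le_of_reparam {d : ℕ} (P Q : ℝ → Pt d) {r : ℝ} {α β : ℝ → ℝ}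
    (hα : IsReparam α) (hβ : IsReparam β)
    (h : ∀ x ∈ Set.Icc (0:ℝ) 1, dist (P (α x)) (Q (β x)) ≤ r) : frechetDist P Q ≤ r := by
  have : Nonempty (Set.Icc (0:ℝ) 1) := ⟨⟨0, Set.left_mem_Icc.2 zero_le_one⟩⟩
  have hsup : (⨆ y : Set.Icc (0:ℝ) 1, dist (P (α (y : ℝ))) (Q (β (y : ℝ)))) ≤ r :=
    ciSup_le fun y => h y y.2
  unfold frechetDist
  refine le_trans (csInf_le ⟨0, ?_⟩ (by exact ⟨α, β, hα, hβ, rfl⟩)) hsup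
  rintro _ ⟨α', β', -, -, rfl⟩
  exact Real.iSup_nonneg fun _ => dist_nonneg

lemma frechet_piece_perturb {d : ℕ} (K Q : ℝ → Pt d) (hK : ContinuousOn K (Set.Icc 0 1))
    (hQ : ContinuousOn Q (Set.Icc 0 1)) {T A T' B r η : ℝ} (hη : 0 ≤ η)
    (hA : 0 ≤ A) (hB : B ≤ 1) (h1 : T ≤ A) (h2 : A ≤ T') (h3 : T' ≤ B)
    (hd : frechetDist (subcurve K A B) Q ≤ r)
    (hTA : AffineOn K T A) (hTB : AffineOn K T' B)
    (hcA : dist (K T) (K A) ≤ η) (hcB : dist (K T') (K B) ≤ η) :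
    frechetDist (subcurve K T T') Q ≤ r + η := by
  refine le_of_forall_pos_le_add fun ε hε => ?_
  have hsub : ContinuousOn (subcurve K A B) (Set.Icc 0 1) := by
    refine hK.comp (by fun_prop) fun u hu => ?_
    constructor <;> nlinarith [hu.1, hu.2]
  obtain ⟨α, β, hα, hβ, hab⟩ := exists_reparam_of_frechetDist_le _ _ hsub hQ hd hε
  have hcm : ∀ x ∈ Set.Icc (0:ℝ) 1, max 0 (2 * x - 1) ∈ Set.Icc (0:ℝ) 1 := fun x hx =>
    ⟨le_max_left _ _, max_le zero_le_one (by linarith [hx.2])⟩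
  have hcmono : ∀ x y : ℝ, x ≤ y → max 0 (2 * x - 1) ≤ max 0 (2 * y - 1) := fun x y h =>
    max_le_max le_rfl (by linarith)
  have hcc : ContinuousOn (fun x : ℝ => max 0 (2 * x - 1)) (Set.Icc 0 1) := by fun_prop
  have hαc : ContinuousOn (fun x : ℝ => α (max 0 (2 * x - 1))) (Set.Icc 0 1) :=
    hα.continuousOn.comp hcc hcm
  obtain ⟨γ, hγ, hγp⟩ := exists_reparam_of_path T T' (h1.trans h2)
    (fun x => T + min 1 (2 * x) * (A - T) + min (α (max 0 (2 * x - 1)) * (B - A)) (T' - A))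
    (ContinuousOn.add (by fun_prop)
      (continuous_min.comp_continuousOn
        (ContinuousOn.prodMk (hαc.mul continuousOn_const) continuousOn_const)))
    (by
      intro x hx y hy hxy
      have e1 : min 1 (2 * x) ≤ min 1 (2 * y) := min_le_min le_rfl (by linarith)
      have e2 := hα.monotoneOn (hcm x hx) (hcm y hy) (hcmono x y hxy)
      have e3 : min (α (max 0 (2 * x - 1)) * (B - A)) (T' - A)
          ≤ min (α (max 0 (2 * y - 1)) * (B - A)) (T' - A) :=
        min_le_min (mul_le_mul_of_nonneg_right e2 (by linarith)) le_rfl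
      have e4 := mul_le_mul_of_nonneg_right e1 (show 0 ≤ A - T by linarith)
      simp only
      linarith)
    (by simp [hα.map_zero, h2])
    (by
      have e1 : min (1:ℝ) (2 * 1) = 1 := by norm_num
      have e2 : max (0:ℝ) (2 * 1 - 1) = 1 := by norm_num
      simp only [e1, e2, hα.map_one]
      rw [min_eq_right (by linarith)]; ring)
  have hβ' : IsReparam (fun x => β (max 0 (2 * x - 1))) := by
    refine ⟨hβ.continuousOn.comp hcc hcm, ?_, ?_, ?_⟩
    · intro x hx y hy hxy
      exact hβ.monotoneOn (hcm x hx) (hcm y hy) (hcmono x y hxy)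
    · simp [hβ.map_zero]
    · have e2 : max (0:ℝ) (2 * 1 - 1) = 1 := by norm_num
      simp only [e2, hβ.map_one]
  refine frechetDist_le_of_reparam _ _ hγ hβ' fun x hx => ?_
  have hx0 := hx.1
  have hx1 := hx.2
  have hmain := hab _ (hcm x hx)
  have hαm := hα.mem (hcm x hx)
  simp only [subcurve] at hmain ⊢
  rw [hγp x hx]
  rcases le_total x (1/2) with hle | hge
  · have e1 : min 1 (2 * x) = 2 * x := min_eq_right (by linarith)
    have e2 : max 0 (2 * x - 1) = 0 := max_eq_left (by linarith)
    rw [e2, hα.map_zero, zero_mul, add_zero] at hmain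
    rw [e1, e2, hα.map_zero, zero_mul, min_eq_left (by linarith), add_zero]
    have hmem : T + 2 * x * (A - T) ∈ Set.Icc T A := by
      constructor <;> nlinarith
    have := affineOn_dist_right hTA hη hcA hmem
    linarith [dist_triangle (K (T + 2 * x * (A - T))) (K A) (Q (β 0))]
  · have e1 : min 1 (2 * x) = 1 := min_eq_left (by linarith)
    rw [e1]
    generalize max 0 (2 * x - 1) = u at *
    rcases le_total (α u * (B - A)) (T' - A) with hc | hc
    · rw [min_eq_left hc]
      have : T + 1 * (A - T) + α u * (B - A) = A + α u * (B - A) := by ring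
      rw [this]; linarith
    · rw [min_eq_right hc]
      have : T + 1 * (A - T) + (T' - A) = T' := by ring
      rw [this]
      have hmem : A + α u * (B - A) ∈ Set.Icc T' B := by
        constructor <;> nlinarith [hαm.1, hαm.2]
      have := affineOn_dist_left hTB hη hcB hmem
      linarith [dist_triangle (K T') (K (A + α u * (B - A))) (Q (β u))]

/-- Let `K : [0,1] → ℝ^d` be continuous, `q_1 … q_m` vertices of a
polygonal curve, `r'', η ≥ 0`. Suppose `0 = s_1 ≤ … ≤ s_m = 1` (here `0`-indexed) satisfy
`d_F(K|[s_i, s_{i+1}], seg(q_i, q_{i+1})) ≤ r''` for all `i`, and `t_1, …, t_m` satisfy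
`t_1 = 0`, `t_m = 1`, `t_i ≤ s_i ≤ t_{i+1}`, `K` affine-linear on each `[t_i, s_i]`, and
`‖K(t_i) − K(s_i)‖ ≤ η`. Then `d_F(K|[t_i, t_{i+1}], seg(q_i, q_{i+1})) ≤ r'' + η` for all
`i`. -/
theorem frechet_pieces_perturb {d : ℕ} (m : ℕ) (hm : 2 ≤ m)
    (K : ℝ → Pt d) (hK : ContinuousOn K (Set.Icc 0 1))
    (q : ℕ → Pt d) (r'' η : ℝ) (hr : 0 ≤ r'') (hη : 0 ≤ η)
    (s t : ℕ → ℝ)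
    (hs0 : s 0 = 0) (hsm : s (m - 1) = 1)
    (hsmono : ∀ i j, i ≤ j → j ≤ m - 1 → s i ≤ s j)
    (hpieces : ∀ i, i + 1 < m →
      frechetDist (subcurve K (s i) (s (i + 1))) (seg (q i) (q (i + 1))) ≤ r'')
    (ht0 : t 0 = 0) (htm : t (m - 1) = 1)
    (hts : ∀ i, i ≤ m - 1 → t i ≤ s i)
    (hst : ∀ i, i + 1 ≤ m - 1 → s i ≤ t (i + 1))
    (haff : ∀ i, i ≤ m - 1 → AffineOn K (t i) (s i))
    (hclose : ∀ i, i ≤ m - 1 → dist (K (t i)) (K (s i)) ≤ η) :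
    ∀ i, i + 1 < m →
      frechetDist (subcurve K (t i) (t (i + 1))) (seg (q i) (q (i + 1))) ≤ r'' + η := by
  intro i hi
  have hA : 0 ≤ s i := hs0 ▸ hsmono 0 i (Nat.zero_le _) (by omega)
  have hB : s (i + 1) ≤ 1 := hsm ▸ hsmono (i + 1) (m - 1) (by omega) le_rfl
  exact frechet_piece_perturb K _ hK (by unfold seg; fun_prop) hη hA hB
    (hts i (by omega)) (hst i (by omega)) (hts (i + 1) (by omega)) (hpieces i hi)
    (haff i (by omega)) (haff (i + 1) (by omega)) (hclose i (by omega))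
    (hclose (i + 1) (by omega))
end
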